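/- arXiv:math-ph/0309041 — 2 statements merged into one kernel-verified Lean document; each statement's English description precedes it below -/
import Mathlib

section
/- Let c₀ be a real constant and let a, b, d : [1,∞) → ℝ be twice continuously differentiable functions satisfying, for all r ≥ 1: r²·d''(r) + 2r·d'(r) − 4d(r) + 2a(r) − (4/r)b(r) = 0; r·b''(r) − (6/r)b(r) + 2a(r) − 2d(r) = 0; and r²·a''(r) + 2r·a'(r) − 6a(r) + 4d(r) + (8/r)b(r) = 0. Suppose the boundary conditions c₀ − a(1) = 0, c₀ − b(1) = 0, a'(1) + 2a(1) − 2d(1) − 2b(1) = 0, and b'(1) + 2b(1) + d(1) = 0 hold, and that a(r), b(r), d(r) all tend to 0 as r → ∞. Then there exists a real constant A such that a(r) = A·r⁻², b(r) = A·r⁻¹, d(r) = −A·r⁻² for all r ≥ 1, and c₀ = A. Conversely, for every real A, the triple (a,b,d) = (A·r⁻², A·r⁻¹, −A·r⁻²) together with c₀ = A satisfies all the above equations, boundary conditions, and decay conditions. -/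
/-!
Put `β(r) = b(r) / r`. The system becomes `r² u'' + 2 r u' = M u` for `u = (a, β, d)` with a constant
matrix `M` that is diagonalizable with eigenvalues `2, 2, 12`. Left eigenvectors give the decoupled
combinations `p = a + 2β`, `q = a + 2d` (eigenvalue `2 = 1 · 2`) and `w = a - 2β - d` (eigenvalue
`12 = 3 · 4`). Each solves an Euler equation `r² f'' + 2 r f' = k (k + 1) f`, whose solutions are
spanned by `r ^ k` and `r ^ (-k - 1)`; decay at infinity leaves only the second one
(`euler_decaying`). Hence `p = p(1) / r²`, `q = q(1) / r²`, `w = w(1) / r⁴`, and the derivatives at `1`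
are determined by the values. With `a(1) = β(1) = c₀`, the condition on `a'(1)` forces `d(1) = -c₀`,
so `w = 0`, `p = 3c₀ / r²`, `q = -c₀ / r²`.
-/

open Set Filter

/-- The Type (I), degree `L = 1` radial system on `[1,∞)`: equations, boundary conditions
at `r = 1`, and decay at infinity. -/
def SolvesTypeIDegreeOne (c₀ : ℝ) (a b d : ℝ → ℝ) : Prop :=
  ContDiffOn ℝ 2 a (Ici 1) ∧ ContDiffOn ℝ 2 b (Ici 1) ∧ ContDiffOn ℝ 2 d (Ici 1) ∧
  (∀ r ∈ Ici (1 : ℝ),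
    r ^ 2 * derivWithin (derivWithin d (Ici 1)) (Ici 1) r
      + 2 * r * derivWithin d (Ici 1) r - 4 * d r + 2 * a r - (4 / r) * b r = 0) ∧
  (∀ r ∈ Ici (1 : ℝ),
    r * derivWithin (derivWithin b (Ici 1)) (Ici 1) r
      - (6 / r) * b r + 2 * a r - 2 * d r = 0) ∧
  (∀ r ∈ Ici (1 : ℝ),
    r ^ 2 * derivWithin (derivWithin a (Ici 1)) (Ici 1) r
      + 2 * r * derivWithin a (Ici 1) r - 6 * a r + 4 * d r + (8 / r) * b r = 0) ∧
  c₀ - a 1 = 0 ∧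
  c₀ - b 1 = 0 ∧
  derivWithin a (Ici 1) 1 + 2 * a 1 - 2 * d 1 - 2 * b 1 = 0 ∧
  derivWithin b (Ici 1) 1 + 2 * b 1 + d 1 = 0 ∧
  Tendsto a atTop (nhds 0) ∧ Tendsto b atTop (nhds 0) ∧ Tendsto d atTop (nhds 0)

lemma const_on_Ici {g : ℝ → ℝ} (hg : ∀ r ∈ Ici (1 : ℝ), HasDerivWithinAt g 0 (Ici 1) r)
    {r : ℝ} (hr : r ∈ Ici (1 : ℝ)) : g r = g 1 := by
  have h := (convex_Ici (1 : ℝ)).norm_image_sub_le_of_norm_hasDerivWithin_le (C := 0)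
    (f := g) (f' := fun _ => 0) hg (by simp) (self_mem_Ici) hr
  simpa [sub_eq_zero] using h

/-- Decaying solutions of the Euler equation `r² f'' + 2 r f' = k (k + 1) f` on `[1, ∞)` are multiples
of `r ^ (-k - 1)`. The first integrals `r ^ (-k) (r f' + (k + 1) f)` and `r ^ (k + 1) (r f' - k f)`
are constant, and decay makes the first one vanish; at `r = 1` this gives the value of `f'(1)`.
Here `f₁`, `f₂` are the first and second one-sided-at-`1` derivatives of `f`. -/
lemma euler_decaying (k : ℕ) (hk : 1 ≤ k) {f f₁ f₂ : ℝ → ℝ}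
    (h1 : ∀ r ∈ Ici (1 : ℝ), HasDerivWithinAt f (f₁ r) (Ici 1) r)
    (h2 : ∀ r ∈ Ici (1 : ℝ), HasDerivWithinAt f₁ (f₂ r) (Ici 1) r)
    (hode : ∀ r ∈ Ici (1 : ℝ), r ^ 2 * f₂ r + 2 * r * f₁ r = k * (k + 1) * f r)
    (hlim : Tendsto f atTop (nhds 0)) :
    f₁ 1 = -(k + 1) * f 1 ∧ ∀ r ∈ Ici (1 : ℝ), f r = f 1 * (r ^ (k + 1))⁻¹ := by
  obtain ⟨n, rfl⟩ : ∃ n, k = n + 1 := ⟨k - 1, by omega⟩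
  push_cast at *
  have hA : ∀ r ∈ Ici (1 : ℝ), (r * f₁ r + (n + 2) * f r) / r ^ (n + 1) = f₁ 1 + (n + 2) * f 1 := by
    intro r hr
    have := const_on_Ici (g := fun r => (r * f₁ r + (n + 2) * f r) / r ^ (n + 1)) ?_ hr
    · simpa using this
    intro r hr
    have hr0 : r ≠ 0 := by have : (1 : ℝ) ≤ r := hr; positivity
    refine ((((hasDerivWithinAt_id r _).mul (h2 r hr)).add ((h1 r hr).const_mul ((n : ℝ) + 2))).div
      ((hasDerivAt_pow (n + 1) r).hasDerivWithinAt) (pow_ne_zero _ hr0)).congr_deriv ?_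
    rw [div_eq_zero_iff]; left
    simp only [id, Pi.add_apply, Pi.mul_apply, Nat.add_sub_cancel]
    push_cast
    linear_combination (r ^ n) * hode r hr
  have hB : ∀ r ∈ Ici (1 : ℝ), r ^ (n + 2) * (r * f₁ r - (n + 1) * f r) = f₁ 1 - (n + 1) * f 1 := by
    intro r hr
    have := const_on_Ici (g := fun r => r ^ (n + 2) * (r * f₁ r - (n + 1) * f r)) ?_ hr
    · simpa using this
    intro r hr
    refine (((hasDerivAt_pow (n + 2) r).hasDerivWithinAt).mul
      (((hasDerivWithinAt_id r _).mul (h2 r hr)).sub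
        ((h1 r hr).const_mul ((n : ℝ) + 1)))).congr_deriv ?_
    simp only [id, Pi.sub_apply, Pi.mul_apply]
    rw [show n + 2 - 1 = n + 1 by omega]
    push_cast
    linear_combination (r ^ (n + 1)) * hode r hr
  set C := f₁ 1 + (n + 2) * f 1 with hC
  set D := f₁ 1 - (n + 1) * f 1 with hD
  -- Eliminating `f'` between the two first integrals.
  have hCD : ∀ r ∈ Ici (1 : ℝ),
      C = (2 * n + 3) * (f r * (r ^ (n + 1))⁻¹) + D * (r ^ (2 * n + 3))⁻¹ := by
    intro r hr
    have hr0 : r ≠ 0 := by have : (1 : ℝ) ≤ r := hr; positivity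
    rw [← hA r hr, ← hB r hr]
    field_simp
    ring
  have hC0 : C = 0 := by
    have hp : ∀ m : ℕ, m ≠ 0 → Tendsto (fun r : ℝ => (r ^ m)⁻¹) atTop (nhds 0) := fun m hm =>
      tendsto_inv_atTop_zero.comp (tendsto_pow_atTop hm)
    have ht : Tendsto (fun r : ℝ =>
        (2 * n + 3) * (f r * (r ^ (n + 1))⁻¹) + D * (r ^ (2 * n + 3))⁻¹) atTop (nhds 0) := by
      simpa using ((hlim.mul (hp (n + 1) (by omega))).const_mul (2 * (n : ℝ) + 3)).add
        ((hp (2 * n + 3) (by omega)).const_mul D)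
    refine tendsto_nhds_unique (tendsto_const_nhds.congr' ?_) ht
    filter_upwards [eventually_ge_atTop (1 : ℝ)] with r hr using hCD r hr
  have hf1 : f₁ 1 = -((n : ℝ) + 1 + 1) * f 1 := by linear_combination hC0 - hC
  refine ⟨hf1, fun r hr => ?_⟩
  have hr0 : r ≠ 0 := by have : (1 : ℝ) ≤ r := hr; positivity
  have h := hCD r hr
  rw [hC0, hD, hf1] at h
  have hn : (2 * (n : ℝ) + 3) ≠ 0 := by positivity
  have e1 : r ^ (2 * n + 3) = r ^ (n + 1) * r ^ (n + 1 + 1) := by ring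
  have h3 : (2 * (n : ℝ) + 3) * (r ^ (n + 1))⁻¹ * (f r - f 1 * (r ^ (n + 1 + 1))⁻¹) = 0 := by
    rw [e1, mul_inv] at h
    linear_combination -h
  rcases mul_eq_zero.1 h3 with h4 | h4
  · exact absurd h4 (mul_ne_zero hn (inv_ne_zero (pow_ne_zero _ hr0)))
  · linarith

lemma hasDerivWithinAt_of_contDiffOn_two {f : ℝ → ℝ} (hf : ContDiffOn ℝ 2 f (Ici 1)) :
    (∀ r ∈ Ici (1 : ℝ), HasDerivWithinAt f (derivWithin f (Ici 1) r) (Ici 1) r) ∧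
    (∀ r ∈ Ici (1 : ℝ), HasDerivWithinAt (derivWithin f (Ici 1))
      (derivWithin (derivWithin f (Ici 1)) (Ici 1) r) (Ici 1) r) := by
  have h : ContDiffOn ℝ 1 (derivWithin f (Ici 1)) (Ici 1) :=
    hf.derivWithin (uniqueDiffOn_Ici 1) (by norm_num)
  exact ⟨fun r hr => (hf.differentiableOn (by norm_num) r hr).hasDerivWithinAt,
    fun r hr => (h.differentiableOn (by norm_num) r hr).hasDerivWithinAt⟩

/-- Reads off the iterated `derivWithin` of an explicit function from its two-sided derivatives. -/
lemma derivWithin_eq_of_hasDerivAt {f f₁ f₂ : ℝ → ℝ}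
    (h1 : ∀ r ∈ Ici (1 : ℝ), HasDerivAt f (f₁ r) r)
    (h2 : ∀ r ∈ Ici (1 : ℝ), HasDerivAt f₁ (f₂ r) r) :
    (∀ r ∈ Ici (1 : ℝ), derivWithin f (Ici 1) r = f₁ r) ∧
    (∀ r ∈ Ici (1 : ℝ), derivWithin (derivWithin f (Ici 1)) (Ici 1) r = f₂ r) := by
  have e1 : ∀ r ∈ Ici (1 : ℝ), derivWithin f (Ici 1) r = f₁ r := fun r hr =>
    (h1 r hr).hasDerivWithinAt.derivWithin (uniqueDiffOn_Ici 1 r hr)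
  refine ⟨e1, fun r hr => ?_⟩
  rw [derivWithin_congr e1 (e1 r hr)]
  exact (h2 r hr).hasDerivWithinAt.derivWithin (uniqueDiffOn_Ici 1 r hr)

/-- Uniqueness: the constant `A` of the one-parameter family is `c₀`. -/
lemma forward {c₀ : ℝ} {a b d : ℝ → ℝ} (h : SolvesTypeIDegreeOne c₀ a b d) :
    ∀ r ∈ Ici (1 : ℝ),
      a r = c₀ * (r ^ 2)⁻¹ ∧ b r = c₀ * r⁻¹ ∧ d r = -c₀ * (r ^ 2)⁻¹ := by
  obtain ⟨ha, hb, hd, ed, eb, ea, ba, bb, ba', -, la, lb, ld⟩ := h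
  obtain ⟨ha1, ha2⟩ := hasDerivWithinAt_of_contDiffOn_two ha
  obtain ⟨hb1, hb2⟩ := hasDerivWithinAt_of_contDiffOn_two hb
  obtain ⟨hd1, hd2⟩ := hasDerivWithinAt_of_contDiffOn_two hd
  set a₁ := derivWithin a (Ici 1)
  set b₁ := derivWithin b (Ici 1)
  set d₁ := derivWithin d (Ici 1)
  set a₂ := derivWithin a₁ (Ici 1)
  set b₂ := derivWithin b₁ (Ici 1)
  set d₂ := derivWithin d₁ (Ici 1)
  let β : ℝ → ℝ := fun r => b r / r
  let β₁ : ℝ → ℝ := fun r => b₁ r / r - b r / r ^ 2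
  let β₂ : ℝ → ℝ := fun r => b₂ r / r - 2 * b₁ r / r ^ 2 + 2 * b r / r ^ 3
  have hβ1 : ∀ r ∈ Ici (1 : ℝ), HasDerivWithinAt β (β₁ r) (Ici 1) r := by
    intro r hr
    have hr0 : r ≠ 0 := by have : (1 : ℝ) ≤ r := hr; positivity
    refine ((hb1 r hr).div (hasDerivWithinAt_id r _) hr0).congr_deriv ?_
    simp only [β₁, id]
    field_simp
  have hβ2 : ∀ r ∈ Ici (1 : ℝ), HasDerivWithinAt β₁ (β₂ r) (Ici 1) r := by
    intro r hr
    have hr0 : r ≠ 0 := by have : (1 : ℝ) ≤ r := hr; positivity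
    refine (((hb2 r hr).div (hasDerivWithinAt_id r _) hr0).sub
      ((hb1 r hr).div (hasDerivAt_pow 2 r).hasDerivWithinAt (pow_ne_zero 2 hr0))).congr_deriv ?_
    simp only [β₂, id]
    field_simp
    push_cast
    ring
  have lβ : Tendsto β atTop (nhds 0) := by
    simpa [β, div_eq_mul_inv] using lb.mul tendsto_inv_atTop_zero
  have eβ : ∀ r ∈ Ici (1 : ℝ),
      r ^ 2 * β₂ r + 2 * r * β₁ r - 6 * β r + 2 * a r - 2 * d r = 0 := by
    intro r hr
    have hr0 : r ≠ 0 := by have : (1 : ℝ) ≤ r := hr; positivity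
    rw [← eb r hr]
    simp only [β, β₁, β₂]
    field_simp
    ring
  have cβ : ∀ r c : ℝ, (c / r) * b r = c * β r := fun r c => by simp only [β]; ring
  simp only [cβ] at ed ea
  obtain ⟨p', hp⟩ := euler_decaying 1 le_rfl
    (f := fun r => a r + 2 * β r) (f₁ := fun r => a₁ r + 2 * β₁ r) (f₂ := fun r => a₂ r + 2 * β₂ r)
    (fun r hr => (ha1 r hr).add ((hβ1 r hr).const_mul 2))
    (fun r hr => (ha2 r hr).add ((hβ2 r hr).const_mul 2))
    (fun r hr => by push_cast; linear_combination ea r hr + 2 * eβ r hr)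
    (by simpa using la.add (lβ.const_mul 2))
  obtain ⟨q', hq⟩ := euler_decaying 1 le_rfl
    (f := fun r => a r + 2 * d r) (f₁ := fun r => a₁ r + 2 * d₁ r) (f₂ := fun r => a₂ r + 2 * d₂ r)
    (fun r hr => (ha1 r hr).add ((hd1 r hr).const_mul 2))
    (fun r hr => (ha2 r hr).add ((hd2 r hr).const_mul 2))
    (fun r hr => by push_cast; linear_combination ea r hr + 2 * ed r hr)
    (by simpa using la.add (ld.const_mul 2))
  obtain ⟨w', hw⟩ := euler_decaying 3 (by norm_num)
    (f := fun r => a r - 2 * β r - d r) (f₁ := fun r => a₁ r - 2 * β₁ r - d₁ r)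
    (f₂ := fun r => a₂ r - 2 * β₂ r - d₂ r)
    (fun r hr => ((ha1 r hr).sub ((hβ1 r hr).const_mul 2)).sub (hd1 r hr))
    (fun r hr => ((ha2 r hr).sub ((hβ2 r hr).const_mul 2)).sub (hd2 r hr))
    (fun r hr => by push_cast; linear_combination ea r hr - 2 * eβ r hr - ed r hr)
    (by simpa using (la.sub (lβ.const_mul 2)).sub ld)
  have hβ : β 1 = b 1 := by simp [β]
  push_cast at p' q' w'
  have A : a 1 = c₀ := by linarith
  have B : b 1 = c₀ := by linarith
  have Dd : d 1 = -c₀ := by linarith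
  intro r hr
  have hr0 : r ≠ 0 := by have : (1 : ℝ) ≤ r := hr; positivity
  have P := hp r hr
  have Q := hq r hr
  have W := hw r hr
  simp only [hβ, A, B, Dd] at P Q W
  norm_num at P Q W
  have hbβ : b r = r * β r := by simp only [β]; field_simp
  have hβr : β r = c₀ * (r ^ 2)⁻¹ := by linarith
  refine ⟨by linarith, ?_, by linarith⟩
  rw [hbβ, hβr]
  field_simp

lemma backward (A : ℝ) : SolvesTypeIDegreeOne A
    (fun r => A * (r ^ 2)⁻¹) (fun r => A * r⁻¹) (fun r => -A * (r ^ 2)⁻¹) := by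
  have hne : ∀ r ∈ Ici (1 : ℝ), r ≠ 0 := fun r hr => by
    have : (1 : ℝ) ≤ r := hr
    positivity
  have smooth2 : ∀ c : ℝ, ContDiffOn ℝ 2 (fun r : ℝ => c * (r ^ 2)⁻¹) (Ici 1) := fun c =>
    contDiffOn_const.mul ((contDiffOn_id.pow 2).inv fun r hr => pow_ne_zero 2 (hne r hr))
  have smooth1 : ContDiffOn ℝ 2 (fun r : ℝ => A * r⁻¹) (Ici 1) :=
    contDiffOn_const.mul (contDiffOn_id.inv hne)
  have hpow : ∀ (m : ℕ) (c : ℝ), ∀ r ∈ Ici (1 : ℝ),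
      HasDerivAt (fun r : ℝ => c * (r ^ m)⁻¹) (-m * c * (r ^ (m + 1))⁻¹) r := by
    intro m c r hr
    have hr0 := hne r hr
    refine (((hasDerivAt_pow m r).fun_inv (pow_ne_zero m hr0)).const_mul c).congr_deriv ?_
    rcases m with _ | m
    · simp
    · simp only [Nat.add_sub_cancel]
      field_simp
      ring
  have d2 := fun c : ℝ => derivWithin_eq_of_hasDerivAt (hpow 2 c) (hpow 3 _)
  have d1 := derivWithin_eq_of_hasDerivAt (hpow 1 A) (hpow 2 _)
  simp only [pow_one] at d1
  have l2 : ∀ c : ℝ, Tendsto (fun r : ℝ => c * (r ^ 2)⁻¹) atTop (nhds 0) := fun c => by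
    simpa using (tendsto_inv_atTop_zero.comp (tendsto_pow_atTop (α := ℝ) two_ne_zero)).const_mul c
  refine ⟨smooth2 A, smooth1, smooth2 (-A), ?_, ?_, ?_, by simp, by simp, ?_, ?_, l2 A,
    by simpa using tendsto_inv_atTop_zero.const_mul A, l2 (-A)⟩
  · intro r hr
    have hr0 := hne r hr
    rw [(d2 (-A)).2 r hr, (d2 (-A)).1 r hr]
    push_cast
    field_simp
    ring
  · intro r hr
    have hr0 := hne r hr
    rw [d1.2 r hr]
    push_cast
    field_simp
    ring
  · intro r hr
    have hr0 := hne r hr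
    rw [(d2 A).2 r hr, (d2 A).1 r hr]
    push_cast
    field_simp
    ring
  · rw [(d2 A).1 1 self_mem_Ici]
    norm_num
  · rw [d1.1 1 self_mem_Ici]
    norm_num
    ring

/-- The solution space of the Type (I), degree `L = 1` radial system is exactly the
one-parameter family `(a, b, d) = (A r⁻², A r⁻¹, −A r⁻²)`, `c₀ = A`. -/
theorem stmt_6 :
    (∀ (c₀ : ℝ) (a b d : ℝ → ℝ), SolvesTypeIDegreeOne c₀ a b d →
      ∃ A : ℝ, (∀ r ∈ Ici (1 : ℝ),
        a r = A * (r ^ 2)⁻¹ ∧ b r = A * r⁻¹ ∧ d r = -A * (r ^ 2)⁻¹) ∧ c₀ = A) ∧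
    (∀ A : ℝ, SolvesTypeIDegreeOne A
      (fun r => A * (r ^ 2)⁻¹) (fun r => A * r⁻¹) (fun r => -A * (r ^ 2)⁻¹)) := by
  exact ⟨fun c₀ _ _ _ h => ⟨c₀, forward h, rfl⟩, backward⟩
end

section
/- Let L ≥ 2 be an integer and let b, c : [1,∞) → ℝ be twice continuously differentiable functions satisfying, for all r ≥ 1: c''(r) − (2/r)c'(r) + (4 − L(L+1))·(1/r²)·c(r) + (4/r)·b(r) = 0 and b''(r) − (4 + L(L+1))·(1/r²)·b(r) + (L(L+1) − 2)·(1/r³)·c(r) = 0. Suppose the boundary conditions c(1) = 0 and b'(1) = −2b(1) hold, and that b(r) → 0 and c(r)/r² → 0 as r → ∞. Then b and c vanish identically on [1,∞). -/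
/-!
With `u = c / r` the system becomes the Euler system `r² u'' = (λ - 2) u - 4 b`,
`r² b'' = -(λ - 2) u + (λ + 4) b`, where `λ = L (L + 1)`. Its matrix has eigenvalues
`(L + 1) (L + 2)` and `L (L - 1)`, with left eigenvectors giving the decoupled unknowns
`w₊ = (L - 1) u - 2 b` and `w₋ = (L + 2) u + 2 b`. Each solves `r² w'' = s (s - 1) w`, with
`s = L + 2` and `s = L` respectively, so `w = K r ^ s + C r ^ (1 - s)`. The decay hypotheses
give `w = o(r)`, which kills the growing mode (`euler_decay`). Hence `r w' = (1 - s) w`, and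
evaluating these two relations at `r = 1` together with the boundary conditions gives
`(4 L - 2) b(1) = 0`. So both `w₊` and `w₋` vanish at `1`, hence everywhere, and so do
`b` and `c`.
-/

open Set Filter

lemma eq_at_one_of_hasDerivWithinAt_zero {f : ℝ → ℝ}
    (hf : ∀ r ∈ Ici (1 : ℝ), HasDerivWithinAt f 0 (Ici 1) r) :
    ∀ r ∈ Ici (1 : ℝ), f r = f 1 := by
  intro r hr
  refine constant_of_has_deriv_right_zero (a := 1) (b := r) ?_ ?_ r ⟨hr, le_rfl⟩
  · exact fun x hx => ((hf x hx.1).continuousWithinAt).mono fun y hy => hy.1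
  · exact fun x hx => (hf x hx.1).mono (Ici_subset_Ici.2 hx.1)

/-- A solution of the Euler equation `r² w'' = s (s - 1) w`, `s = n + 2`, with `w = o(r)` is a
multiple of the decaying solution `r ^ (1 - s)`, and so satisfies `r w' = (1 - s) w`. -/
lemma euler_decay (n : ℕ) (w w₁ w₂ : ℝ → ℝ)
    (h₁ : ∀ r ∈ Ici (1 : ℝ), HasDerivWithinAt w (w₁ r) (Ici 1) r)
    (h₂ : ∀ r ∈ Ici (1 : ℝ), HasDerivWithinAt w₁ (w₂ r) (Ici 1) r)
    (heq : ∀ r ∈ Ici (1 : ℝ), r ^ 2 * w₂ r = (n + 2) * (n + 1) * w r)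
    (hlim : Tendsto (fun r => w r / r) atTop (nhds 0)) :
    w₁ 1 + (n + 1) * w 1 = 0 ∧ ∀ r ∈ Ici (1 : ℝ), r ^ (n + 1) * w r = w 1 := by
  -- `p = r w' + (s - 1) w` satisfies `r p' = s p`, so `p / r ^ s` is constant.
  have hp : ∀ r ∈ Ici (1 : ℝ),
      (r * w₁ r + (n + 1) * w r) / r ^ (n + 2) = w₁ 1 + (n + 1) * w 1 := by
    intro r hr
    have := eq_at_one_of_hasDerivWithinAt_zero
      (f := fun r => (r * w₁ r + (n + 1) * w r) / r ^ (n + 2)) ?_ r hr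
    · simpa using this
    intro x hx
    have hx0 : x ≠ 0 := (lt_of_lt_of_le one_pos hx).ne'
    have hd := ((((hasDerivWithinAt_id x (Ici 1)).mul (h₂ x hx)).add
      ((h₁ x hx).const_mul ((n : ℝ) + 1))).div
      ((hasDerivAt_pow (n + 2) x).hasDerivWithinAt (s := Ici 1)) (pow_ne_zero _ hx0))
    refine hd.congr_deriv ?_
    rw [div_eq_zero_iff]
    left
    have e := heq x hx
    simp only [Pi.add_apply, Pi.mul_apply, id]
    push_cast
    linear_combination x ^ (n + 1) * e
  set K := w₁ 1 + (n + 1) * w 1 with hK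
  have hn : (2 * (n : ℝ) + 3) ≠ 0 := by positivity
  -- Hence `(r ^ (s - 1) w)' = K r ^ (2 s - 2)`, which integrates explicitly.
  have hH : ∀ r ∈ Ici (1 : ℝ),
      r ^ (n + 1) * w r - K / (2 * n + 3) * r ^ (2 * n + 3) = w 1 - K / (2 * n + 3) := by
    intro r hr
    have := eq_at_one_of_hasDerivWithinAt_zero
      (f := fun r => r ^ (n + 1) * w r - K / (2 * n + 3) * r ^ (2 * n + 3)) ?_ r hr
    · simpa using this
    intro x hx
    have hx0 : x ≠ 0 := (lt_of_lt_of_le one_pos hx).ne'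
    have hd := (((hasDerivAt_pow (n + 1) x).hasDerivWithinAt (s := Ici 1)).mul (h₁ x hx)).sub
      (((hasDerivAt_pow (2 * n + 3) x).hasDerivWithinAt (s := Ici 1)).const_mul
        (K / (2 * n + 3)))
    refine hd.congr_deriv ?_
    have e := hp x hx
    rw [div_eq_iff (pow_ne_zero _ hx0)] at e
    simp only [Nat.add_succ_sub_one]
    push_cast
    field_simp
    linear_combination x ^ n * e
  -- Dividing by `r ^ (2 s - 1)` and letting `r → ∞` forces `K = 0`.
  have hK0 : K / (2 * n + 3) = 0 := by
    have hinv : ∀ k : ℕ, Tendsto (fun r : ℝ => (r ^ (k + 1))⁻¹) atTop (nhds 0) := fun k =>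
      (tendsto_pow_atTop (Nat.succ_ne_zero k)).inv_tendsto_atTop
    have hT := (hlim.mul (hinv n)).sub
      ((hinv (2 * n + 2)).const_mul (w 1 - K / (2 * n + 3)))
    simp only [mul_zero, sub_zero] at hT
    refine tendsto_nhds_unique (tendsto_const_nhds.congr' ?_) hT
    filter_upwards [eventually_ge_atTop 1] with r hr
    have hr0 : r ≠ 0 := (lt_of_lt_of_le one_pos hr).ne'
    have e := hH r hr
    have e2 : w 1 - K / (2 * n + 3) =
      r ^ (n + 1) * w r - K / (2 * n + 3) * r ^ (2 * n + 3) := e.symm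
    rw [e2]
    generalize K / (2 * (n : ℝ) + 3) = q
    have : r ^ (2 * n + 2 + 1) = r ^ (n + 1) * r ^ (n + 1) * r := by ring
    rw [show 2 * n + 3 = 2 * n + 2 + 1 from rfl, this]
    field_simp
    ring
  refine ⟨(div_eq_zero_iff.1 hK0).resolve_right hn, fun r hr => ?_⟩
  have := hH r hr
  rw [hK0] at this
  simpa using this

/-- For degree `L ≥ 2`, the Type (II) radial system on `[1,∞)` with the stated boundary
conditions at `r = 1` and decay at infinity has only the trivial solution. -/
theorem stmt_9 (L : ℕ) (hL : 2 ≤ L) (b c : ℝ → ℝ)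
    (hb : ContDiffOn ℝ 2 b (Ici 1)) (hc : ContDiffOn ℝ 2 c (Ici 1))
    (heqc : ∀ r ∈ Ici (1 : ℝ),
      derivWithin (derivWithin c (Ici 1)) (Ici 1) r
        - (2 / r) * derivWithin c (Ici 1) r
        + (4 - (L : ℝ) * ((L : ℝ) + 1)) * (1 / r ^ 2) * c r + (4 / r) * b r = 0)
    (heqb : ∀ r ∈ Ici (1 : ℝ),
      derivWithin (derivWithin b (Ici 1)) (Ici 1) r
        - (4 + (L : ℝ) * ((L : ℝ) + 1)) * (1 / r ^ 2) * b r
        + ((L : ℝ) * ((L : ℝ) + 1) - 2) * (1 / r ^ 3) * c r = 0)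
    (hbc1 : c 1 = 0)
    (hbc2 : derivWithin b (Ici 1) 1 = -2 * b 1)
    (hlimb : Tendsto b atTop (nhds 0))
    (hlimc : Tendsto (fun r => c r / r ^ 2) atTop (nhds 0)) :
    ∀ r ∈ Ici (1 : ℝ), b r = 0 ∧ c r = 0 := by
  obtain ⟨m, rfl⟩ := Nat.exists_eq_add_of_le' hL
  have hU := uniqueDiffOn_Ici (1 : ℝ)
  have D : ∀ f : ℝ → ℝ, ContDiffOn ℝ 2 f (Ici 1) → ∀ r ∈ Ici (1 : ℝ),
      HasDerivWithinAt f (derivWithin f (Ici 1) r) (Ici 1) r ∧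
      HasDerivWithinAt (derivWithin f (Ici 1))
        (derivWithin (derivWithin f (Ici 1)) (Ici 1) r) (Ici 1) r := by
    intro f hf r hr
    refine ⟨(hf.differentiableOn (by norm_num) r hr).hasDerivWithinAt, ?_⟩
    have h1 : ContDiffOn ℝ 1 (derivWithin f (Ici 1)) (Ici 1) :=
      hf.derivWithin hU (by norm_num)
    exact (h1.differentiableOn (by norm_num) r hr).hasDerivWithinAt
  have Db := D b hb
  have Dc := D c hc
  generalize derivWithin (derivWithin b (Ici 1)) (Ici 1) = b₂ at *
  generalize derivWithin (derivWithin c (Ici 1)) (Ici 1) = c₂ at *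
  generalize derivWithin b (Ici 1) = b₁ at *
  generalize derivWithin c (Ici 1) = c₁ at *
  -- The Euler lemma applied to an arbitrary combination `w = α c / r + β b`.
  have key : ∀ (n : ℕ) (α β : ℝ),
      (∀ r ∈ Ici (1 : ℝ), r ^ 2 * (α * (c₂ r / r - 2 * c₁ r / r ^ 2 + 2 * c r / r ^ 3) + β * b₂ r)
        = (n + 2) * (n + 1) * (α * (c r / r) + β * b r)) →
      (α * c₁ 1 + β * b₁ 1) + (n + 1) * (β * b 1) = 0 ∧
      ∀ r ∈ Ici (1 : ℝ), r ^ (n + 1) * (α * (c r / r) + β * b r) = β * b 1 := by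
    intro n α β h
    have := euler_decay n (fun r => α * (c r / r) + β * b r)
      (fun r => α * (c₁ r / r - c r / r ^ 2) + β * b₁ r)
      (fun r => α * (c₂ r / r - 2 * c₁ r / r ^ 2 + 2 * c r / r ^ 3) + β * b₂ r) ?_ ?_ h ?_
    · simpa [hbc1] using this
    · intro r hr
      have hr0 : r ≠ 0 := (lt_of_lt_of_le one_pos hr).ne'
      have hd := (((Dc r hr).1.div (hasDerivWithinAt_id r (Ici 1)) hr0).const_mul α).add
        ((Db r hr).1.const_mul β)
      refine hd.congr_deriv ?_
      simp only [id]
      field_simp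
    · intro r hr
      have hr0 : r ≠ 0 := (lt_of_lt_of_le one_pos hr).ne'
      have hd := ((((Dc r hr).2.div (hasDerivWithinAt_id r (Ici 1)) hr0).sub
        ((Dc r hr).1.div ((hasDerivAt_pow 2 r).hasDerivWithinAt (s := Ici 1))
          (pow_ne_zero 2 hr0))).const_mul α).add ((Db r hr).2.const_mul β)
      refine hd.congr_deriv ?_
      simp only [id]
      push_cast
      field_simp
      ring
    · have hT := (hlimc.const_mul α).add ((hlimb.mul tendsto_inv_atTop_zero).const_mul β)
      simp only [mul_zero, add_zero] at hT
      refine hT.congr' ?_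
      filter_upwards [eventually_ge_atTop 1] with r hr
      have hr0 : r ≠ 0 := (lt_of_lt_of_le one_pos hr).ne'
      field_simp
  push_cast at heqb heqc
  -- `w₊ = (L - 1) u - 2 b`, with exponent `s = L + 2`.
  obtain ⟨p1, p2⟩ := key (m + 2) (m + 1) (-2) (by
    intro r hr
    have hr0 : r ≠ 0 := (lt_of_lt_of_le one_pos hr).ne'
    have e1 := heqc r hr
    have e2 := heqb r hr
    field_simp at e1 e2
    push_cast
    field_simp
    linear_combination ((m : ℝ) + 1) * e1 - 2 * e2)
  -- `w₋ = (L + 2) u + 2 b`, with exponent `s = L`.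
  obtain ⟨q1, q2⟩ := key m (m + 4) 2 (by
    intro r hr
    have hr0 : r ≠ 0 := (lt_of_lt_of_le one_pos hr).ne'
    have e1 := heqc r hr
    have e2 := heqb r hr
    field_simp at e1 e2
    field_simp
    linear_combination ((m : ℝ) + 4) * e1 + 2 * e2)
  rw [hbc2] at p1 q1
  push_cast at p1
  -- Eliminating `c'(1)` between the two relations at `r = 1` leaves a nonzero multiple of `b(1)`.
  have hb1 : b 1 = 0 := by
    have : (4 * (m : ℝ) + 6) * ((m : ℝ) + 1) * b 1 = 0 := by
      linear_combination (m + 1) * q1 - (m + 4) * p1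
    have h : (4 * (m : ℝ) + 6) * ((m : ℝ) + 1) ≠ 0 := by positivity
    exact (mul_eq_zero.1 this).resolve_left h
  intro r hr
  have hr0 : r ≠ 0 := (lt_of_lt_of_le one_pos hr).ne'
  have a1 := p2 r hr
  have a2 := q2 r hr
  rw [hb1, mul_zero] at a1 a2
  have a1 := (mul_eq_zero.1 a1).resolve_left (pow_ne_zero _ hr0)
  have a2 := (mul_eq_zero.1 a2).resolve_left (pow_ne_zero _ hr0)
  have hu : c r / r = 0 := by
    have : (2 * (m : ℝ) + 5) * (c r / r) = 0 := by linear_combination a1 + a2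
    exact (mul_eq_zero.1 this).resolve_left (by positivity)
  refine ⟨?_, (div_eq_zero_iff.1 hu).resolve_right hr0⟩
  rw [hu] at a2
  linarith
end
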